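/- For every z ∈ W_{H*} satisfying b⁻¹z*b = z⁻¹, the element bz lies in I_* and φ(bz) = φ'(z) + φ(b). -/

import Mathlib

set_option synthInstance.maxHeartbeats 1000000
set_option maxHeartbeats 2000000

open scoped Classical

noncomputable section

namespace LY

/-! ## The coefficient field `ℚ(q)` -/

/-- The field `ℚ(q)` of rational functions. -/
abbrev K : Type := RatFunc ℚ

/-- The indeterminate `q`. -/
def qK : K := RatFunc.X

/-- The inclusion `ℤ[q] → ℚ(q)`. -/
def toK (p : Polynomial ℤ) : K := algebraMap (Polynomial ℚ) K (p.map (Int.castRingHom ℚ))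

/-- Evaluation of `p ∈ ℤ[q]` at `−q`, as an element of `ℚ(q)`; i.e. `p(−q)`. -/
def atNegQ (p : Polynomial ℤ) : K := Polynomial.eval₂ (Int.castRingHom K) (-qK) p

/-- The standard basis element `T_w` (resp. `a_w`) of the function model `W → ℚ(q)`
of the Hecke algebra (resp. of the Lusztig–Vogan module `M`). -/
def TT {W : Type} (w : W) : W → K := fun y => if y = w then 1 else 0

variable {B W : Type} [Group W] {M : CoxeterMatrix B}

/-- The Bruhat order on a Coxeter group: `u ≤ v` iff `v` is obtained from `u` by successive
right multiplications by reflections, each increasing the length. -/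
def BruhatLE (cs : CoxeterSystem M W) (u v : W) : Prop :=
  Relation.ReflTransGen
    (fun a b => cs.length a < cs.length b ∧ ∃ t, cs.IsReflection t ∧ b = a * t) u v

/-- Connectedness of the Coxeter diagram of `M`. -/
def DiagramConnected (M : CoxeterMatrix B) : Prop :=
  ∀ i j : B, Relation.ReflTransGen (fun a b => a ≠ b ∧ M a b ≠ 2) i j

/-- An automorphism of `W` preserving the set `S` of simple reflections, i.e. an element
of `A = Aut(W,S)`. -/
def IsDiagAut (cs : CoxeterSystem M W) (a : MulAut W) : Prop :=
  (⇑a) '' (Set.range cs.simple) = Set.range cs.simple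

/-! ## The affine setting -/

/-- All the data and axioms describing the setting: `(W,S)` is the Coxeter group of an
untwisted connected affine Dynkin diagram (an irreducible affine Weyl group); `Λ` is the
subgroup of translations (elements with finite conjugacy class), free abelian of finite
rank and of finite index; `s₀` is a hyperspecial vertex, `J = S − {s₀}`, `W_J` is the
finite subgroup generated by `J` with longest element `w_J`; `*` is the involution of `W`
given by `w* = w_J w w_J` on `W_J` and `λ* = −(ʷᴶλ)` on `Λ`; `pr` is the projection
`W → W_J` along `Λ`; `ρ` is the conjugation action of `W` on `Λ_ℚ ≅ ℚ^rank`
(via the identification `freeIso` of `Λ` with `ℤ^rank`). -/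
structure AffineData (cs : CoxeterSystem M W) where
  finB : Finite B
  conn : DiagramConnected M
  infW : Infinite W
  /-- the subgroup `Λ` of translations -/
  Lam : Subgroup W
  hLam_mem : ∀ w : W, w ∈ Lam ↔ {x : W | IsConj w x}.Finite
  hLam_normal : Lam.Normal
  hLam_comm : ∀ a ∈ Lam, ∀ b ∈ Lam, a * b = b * a
  hLam_index : Lam.FiniteIndex
  /-- `Λ` is free abelian of finite rank -/
  rank : ℕ
  freeIso : Lam ≃* Multiplicative (Fin rank → ℤ)
  /-- the hyperspecial vertex `s₀` -/
  s0 : W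
  hs0_S : s0 ∈ Set.range cs.simple
  /-- `s₀` is hyperspecial: the projection `W → W/Λ` restricts to an isomorphism from the
  subgroup generated by `S − {s₀}` onto `W/Λ`. -/
  hs0_hyper : ∀ w : W, ∃! u : W,
    u ∈ Subgroup.closure (Set.range cs.simple \ {s0}) ∧ w * u⁻¹ ∈ Lam
  hWJ_fin : (Subgroup.closure (Set.range cs.simple \ {s0}) : Set W).Finite
  /-- the longest element `w_J` of `W_J` -/
  wJ : W
  hwJ_mem : wJ ∈ Subgroup.closure (Set.range cs.simple \ {s0})
  hwJ_max : ∀ u ∈ Subgroup.closure (Set.range cs.simple \ {s0}), cs.length u ≤ cs.length wJ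
  /-- the involution `*` of `W` -/
  st : MulAut W
  hst_inv : ∀ w : W, st (st w) = w
  hst_J : ∀ u ∈ Subgroup.closure (Set.range cs.simple \ {s0}), st u = wJ * u * wJ
  hst_Lam : ∀ l ∈ Lam, st l = (wJ * l * wJ⁻¹)⁻¹
  hst_S : ∀ s ∈ Set.range cs.simple, st s ∈ Set.range cs.simple
  /-- lower Bruhat intervals are finite -/
  hBruhat_fin : ∀ w : W, {y : W | BruhatLE cs y w}.Finite
  /-- the projection `W → W_J` along `Λ` (`w ↦ w̄`) -/
  pr : W → W
  hpr : ∀ w : W, pr w ∈ Subgroup.closure (Set.range cs.simple \ {s0}) ∧ w * (pr w)⁻¹ ∈ Lam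
  /-- the conjugation action of `W` on `Λ_ℚ ≅ ℚ^rank` -/
  rho : W → ((Fin rank → ℚ) →ₗ[ℚ] (Fin rank → ℚ))
  hrho : ∀ (w : W) (l : Lam),
    rho w (fun i => ((Multiplicative.toAdd (freeIso l)) i : ℚ)) =
      fun i => ((Multiplicative.toAdd
        (freeIso ⟨w * (l : W) * w⁻¹, hLam_normal.conj_mem _ l.2 w⟩)) i : ℚ)

namespace AffineData

variable {cs : CoxeterSystem M W} (D : AffineData cs)

/-- The set `J = S − {s₀}`. -/
def Jset : Set W := Set.range cs.simple \ {D.s0}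

/-- The finite Weyl group `W_J`. -/
def WJ : Subgroup W := Subgroup.closure D.Jset

/-- `λ ∈ Λ` is a dominant translation (`λ ∈ Λ⁺`). -/
def IsDominant (l : W) : Prop :=
  l ∈ D.Lam ∧ cs.length (l * D.wJ) = cs.length l + cs.length D.wJ

/-- The embedding `Λ → Λ_ℚ = ℚ^rank`. -/
def iota (l : D.Lam) : Fin D.rank → ℚ :=
  fun i => ((Multiplicative.toAdd (D.freeIso l)) i : ℚ)

/-- `e(A)`: the dimension of the `(−1)`-eigenspace of a linear endomorphism `A` of `Λ_ℚ`. -/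
def eNeg (f : (Fin D.rank → ℚ) →ₗ[ℚ] (Fin D.rank → ℚ)) : ℕ :=
  Module.finrank ℚ (Module.End.eigenspace (f : Module.End ℚ (Fin D.rank → ℚ)) (-1))

/-- The map `A_u : λ ↦ ᵘ(λ*) = −(ᵘʷᴶλ)` on `Λ_ℚ`, for `u ∈ W_J`. -/
def Amap (u : W) : (Fin D.rank → ℚ) →ₗ[ℚ] (Fin D.rank → ℚ) := - D.rho (u * D.wJ)

/-- The invariant `φ(w) = e(A_{w̄}) − e(A_e)` for `w ∈ I_*`. -/
def phi (w : W) : ℤ := (D.eNeg (D.Amap (D.pr w)) : ℤ) - (D.eNeg (D.Amap 1) : ℤ)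

/-- The double coset `W_J x W_J`. -/
def DCoset (x : W) : Set W := {y : W | ∃ u ∈ D.WJ, ∃ v ∈ D.WJ, y = u * x * v}

/-- The set `H = J ∩ bJb⁻¹`. -/
def Hset (b : W) : Set W := D.Jset ∩ ((fun s => b * s * b⁻¹) '' D.Jset)

/-- The set `H* ⊆ J`, image of `H` under `*`. -/
def Hstar (b : W) : Set W := (⇑D.st) '' D.Hset b

/-- The subgroup `W_{H*}` generated by `H*`. -/
def WHstar (b : W) : Subgroup W := Subgroup.closure (D.Hstar b)

/-- The reflection representation `R'` of `W_{H*}`, as a subspace of `Λ_ℚ`: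
the span of the vectors `λ − ˢλ` for `λ ∈ Λ`, `s ∈ H*`. -/
def Rprime (b : W) : Submodule ℚ (Fin D.rank → ℚ) :=
  Submodule.span ℚ
    {v : Fin D.rank → ℚ | ∃ l : D.Lam, ∃ s ∈ D.Hstar b,
      v = D.iota l - D.iota ⟨s * (l : W) * s⁻¹, D.hLam_normal.conj_mem _ l.2 s⟩}

/-- `e'(A)`: the dimension of the `(−1)`-eigenspace of an endomorphism `A` of `R'`. -/
def eNeg' {b : W} (f : ↥(D.Rprime b) →ₗ[ℚ] ↥(D.Rprime b)) : ℕ :=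
  Module.finrank ℚ (Module.End.eigenspace (f : Module.End ℚ ↥(D.Rprime b)) (-1))

/-- `φ'(z) = e'(B_z) − e'(B_e)`, where `B_u : x ↦ −u·(w_{H*}·x)` on `R'`; here
`rho'` is the conjugation action of `W_{H*}` on `R'` and `wHs` is the longest element
of `W_{H*}`. -/
def phiP {b : W} (rho' : W → (↥(D.Rprime b) →ₗ[ℚ] ↥(D.Rprime b))) (wHs z : W) : ℤ :=
  (D.eNeg' (-(rho' (z * wHs))) : ℤ) - (D.eNeg' (-(rho' wHs)) : ℤ)

/-- Membership in `A_Λ ⊆ A = Aut(W,S)`: automorphisms acting on `Λ` as conjugation by some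
element of `W_J`. -/
def InALam (a : MulAut W) : Prop :=
  IsDiagAut cs a ∧ ∃ w ∈ D.WJ, ∀ l ∈ D.Lam, a l = w * l * w⁻¹

/-- Membership in the coset `A_Λ* = {a ∘ * : a ∈ A_Λ}`. -/
def InALamStar (c : MulAut W) : Prop := ∃ a : MulAut W, D.InALam a ∧ c = a * D.st

/-- The double coset `W_J x W_J^◇`, where `W_J^◇` is the subgroup generated by
`J^◇ = S − {s₁}`. -/
def DCosetDia (s1 : W) (x : W) : Set W :=
  {y : W | ∃ u ∈ D.WJ, ∃ v ∈ Subgroup.closure (Set.range cs.simple \ {s1}), y = u * x * v}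


end AffineData

/-! ## The Hecke algebra, the Lusztig–Vogan module, and the polynomials `P`, `P^σ` -/

/-- The Hecke algebra of `(W,S)` over `ℚ(q)` (modelled on functions `W → ℚ(q)`, with basis
`TT w = T_w`), together with its bar involution, and the Kazhdan–Lusztig polynomials
`P_{y,w} ∈ ℤ[q]` characterized by their defining properties. -/
structure HeckeData (cs : CoxeterSystem M W) where
  /-- the involution `q ↦ q⁻¹` of `ℚ(q)` -/
  barK : K →+* K
  hbarK_X : barK qK = qK⁻¹
  hbarK_inv : ∀ x, barK (barK x) = x
  /-- the multiplication of the Hecke algebra -/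
  mulH : (W → K) →ₗ[K] (W → K) →ₗ[K] (W → K)
  hmul_assoc : ∀ x y z : W → K, mulH (mulH x y) z = mulH x (mulH y z)
  hmul_one : ∀ x : W → K, mulH (TT 1) x = x ∧ mulH x (TT 1) = x
  hmul_TT : ∀ u v : W, cs.length (u * v) = cs.length u + cs.length v →
    mulH (TT u) (TT v) = TT (u * v)
  hmul_Ts : ∀ s ∈ Set.range cs.simple,
    mulH (TT s) (TT s) = (qK - 1) • TT s + qK • TT (1 : W)
  /-- the bar involution of the Hecke algebra: the ring involution with `q ↦ q⁻¹`,
  `T_w ↦ (T_{w⁻¹})⁻¹` -/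
  barH : (W → K) →+ (W → K)
  hbarH_inv : ∀ x, barH (barH x) = x
  hbarH_smul : ∀ (c : K) (x : W → K), barH (c • x) = barK c • barH x
  hbarH_mul : ∀ x y : W → K, barH (mulH x y) = mulH (barH x) (barH y)
  hbarH_T : ∀ w : W, mulH (barH (TT w)) (TT w⁻¹) = TT (1 : W) ∧
    mulH (TT w⁻¹) (barH (TT w)) = TT (1 : W)
  /-- the Kazhdan–Lusztig polynomials `P_{y,w}` -/
  P : W → W → Polynomial ℤ
  hP_supp : ∀ y w : W, ¬ BruhatLE cs y w → P y w = 0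
  hP_diag : ∀ w : W, P w w = 1
  hP_deg : ∀ y w : W, BruhatLE cs y w → y ≠ w →
    2 * (P y w).natDegree + 1 ≤ cs.length w - cs.length y
  hP_dual : ∀ w : W,
    (qK ^ cs.length w) • barH (fun y => if BruhatLE cs y w then toK (P y w) else 0)
      = fun y => if BruhatLE cs y w then toK (P y w) else 0

/-- The Lusztig–Vogan module `M` over the Hecke algebra `H'` with parameter `q²`, attached to
a length-preserving involutive automorphism `star` of `(W,S)`, together with its bar
involution, and the polynomials `P^σ_{y,w} ∈ ℤ[q]` (for `y, w ∈ I_*`) characterized by their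
defining properties.  Both `H'` and `M` are modelled on functions `W → ℚ(q)`; the basis
element `a_w` of `M` (for `w ∈ I_*`) is `TT w`. -/
structure LVData (cs : CoxeterSystem M W) (star : MulAut W) where
  /-- the involution `q ↦ q⁻¹` of `ℚ(q)` -/
  barK : K →+* K
  hbarK_X : barK qK = qK⁻¹
  hbarK_inv : ∀ x, barK (barK x) = x
  /-- the multiplication of the Hecke algebra `H'` with parameter `q²` -/
  mulH' : (W → K) →ₗ[K] (W → K) →ₗ[K] (W → K)
  hmul'_assoc : ∀ x y z : W → K, mulH' (mulH' x y) z = mulH' x (mulH' y z)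
  hmul'_one : ∀ x : W → K, mulH' (TT 1) x = x ∧ mulH' x (TT 1) = x
  hmul'_TT : ∀ u v : W, cs.length (u * v) = cs.length u + cs.length v →
    mulH' (TT u) (TT v) = TT (u * v)
  hmul'_Ts : ∀ s ∈ Set.range cs.simple,
    mulH' (TT s) (TT s) = (qK ^ 2 - 1) • TT s + (qK ^ 2) • TT (1 : W)
  /-- the bar involution of `H'` -/
  barH' : (W → K) →+ (W → K)
  hbarH'_inv : ∀ x, barH' (barH' x) = x
  hbarH'_smul : ∀ (c : K) (x : W → K), barH' (c • x) = barK c • barH' x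
  hbarH'_mul : ∀ x y : W → K, barH' (mulH' x y) = mulH' (barH' x) (barH' y)
  hbarH'_T : ∀ w : W, mulH' (barH' (TT w)) (TT w⁻¹) = TT (1 : W) ∧
    mulH' (TT w⁻¹) (barH' (TT w)) = TT (1 : W)
  /-- the action of `H'` on the module `M` -/
  actM : (W → K) →ₗ[K] (W → K) →ₗ[K] (W → K)
  hact_one : ∀ m : W → K, actM (TT 1) m = m
  hact_mul : ∀ (h h' : W → K) (m : W → K), actM (mulH' h h') m = actM h (actM h' m)
  hact1 : ∀ s ∈ Set.range cs.simple, ∀ w : W, star w = w⁻¹ →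
    s * w = w * star s → cs.length w < cs.length (s * w) →
    actM (TT s) (TT w) = qK • TT w + (qK + 1) • TT (s * w)
  hact2 : ∀ s ∈ Set.range cs.simple, ∀ w : W, star w = w⁻¹ →
    s * w = w * star s → cs.length (s * w) < cs.length w →
    actM (TT s) (TT w) = (qK ^ 2 - qK - 1) • TT w + (qK ^ 2 - qK) • TT (s * w)
  hact3 : ∀ s ∈ Set.range cs.simple, ∀ w : W, star w = w⁻¹ →
    s * w ≠ w * star s → cs.length w < cs.length (s * w) →
    actM (TT s) (TT w) = TT (s * w * star s)
  hact4 : ∀ s ∈ Set.range cs.simple, ∀ w : W, star w = w⁻¹ →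
    s * w ≠ w * star s → cs.length (s * w) < cs.length w →
    actM (TT s) (TT w) = (qK ^ 2 - 1) • TT w + (qK ^ 2) • TT (s * w * star s)
  /-- the bar involution of the module `M` -/
  barM : (W → K) →+ (W → K)
  hbarM_inv : ∀ m : W → K, barM (barM m) = m
  hbarM_smul : ∀ (c : K) (m : W → K), barM (c • m) = barK c • barM m
  hbarM_act : ∀ (h m : W → K), barM (actM h m) = actM (barH' h) (barM m)
  hbarM_one : barM (TT 1) = TT (1 : W)
  /-- the Lusztig–Vogan polynomials `P^σ_{y,w}` -/
  Psig : W → W → Polynomial ℤ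
  hPsig_supp : ∀ y w : W, ¬ (BruhatLE cs y w ∧ star y = y⁻¹) → Psig y w = 0
  hPsig_diag : ∀ w : W, star w = w⁻¹ → Psig w w = 1
  hPsig_deg : ∀ y w : W, star w = w⁻¹ → star y = y⁻¹ → BruhatLE cs y w → y ≠ w →
    2 * (Psig y w).natDegree + 1 ≤ cs.length w - cs.length y
  hPsig_dual : ∀ w : W, star w = w⁻¹ →
    (qK ^ (2 * cs.length w)) •
        barM (fun y => if BruhatLE cs y w ∧ star y = y⁻¹ then toK (Psig y w) else 0)
      = fun y => if BruhatLE cs y w ∧ star y = y⁻¹ then toK (Psig y w) else 0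

/-! ## The `Z`-polynomials -/

/-- `Z_w(q) = Σ_{y ≤ w} P_{y,w}(q) q^{ℓ(y)}`. -/
def Zpoly (cs : CoxeterSystem M W) (HD : HeckeData cs) (w : W) : K :=
  ∑ᶠ y : W, if BruhatLE cs y w then toK (HD.P y w) * qK ^ cs.length y else 0

/-- `Z_w(−q) = Σ_{y ≤ w} P_{y,w}(−q) (−q)^{ℓ(y)}`. -/
def ZpolyNeg (cs : CoxeterSystem M W) (HD : HeckeData cs) (w : W) : K :=
  ∑ᶠ y : W, if BruhatLE cs y w then atNegQ (HD.P y w) * (-qK) ^ cs.length y else 0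

/-- `Z^σ_w(q) = Σ_{y ≤ w, y ∈ I_*} P^σ_{y,w}(q) q^{ℓ(y)} ((q−1)/(q+1))^{φ(y)}`. -/
def Zsig (cs : CoxeterSystem M W) (D : AffineData cs) (LD : LVData cs D.st) (w : W) : K :=
  ∑ᶠ y : W, if BruhatLE cs y w ∧ D.st y = y⁻¹ then
    toK (LD.Psig y w) * qK ^ cs.length y * ((qK - 1) / (qK + 1)) ^ D.phi y else 0

/-! ### Coxeter combinatorics -/
section Cox
variable {B W : Type} [Group W] {M : CoxeterMatrix B} (cs : CoxeterSystem M W)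

/-- one generator of the reflection cocycle action -/
def etaGen (i : B) : Function.End (W × ZMod 2) :=
  fun p => (cs.simple i * p.1 * cs.simple i, p.2 + if p.1 = cs.simple i then 1 else 0)

theorem etaGen_pow (i j : B) (k : ℕ) (p : W × ZMod 2) :
    ((etaGen cs i * etaGen cs j) ^ k) p =
      ((cs.simple i * cs.simple j) ^ k * p.1 * ((cs.simple i * cs.simple j) ^ k)⁻¹,
        p.2 + ∑ n ∈ Finset.range (2 * k),
          if p.1 = ((cs.simple i * cs.simple j) ^ n)⁻¹ * cs.simple j then 1 else 0) := by
  have hj : ∀ n : ℕ, cs.simple j * (cs.simple i * cs.simple j) ^ n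
      = ((cs.simple i * cs.simple j) ^ n)⁻¹ * cs.simple j := by
    intro n
    induction n with
    | zero => simp
    | succ n ih =>
      rw [pow_succ, ← mul_assoc, ih]
      rw [← pow_succ, pow_succ' (cs.simple i * cs.simple j) n]
      simp [mul_assoc]
  induction k with
  | zero => simp; rfl
  | succ k ih =>
    rw [pow_succ']
    change (etaGen cs i) ((etaGen cs j) (((etaGen cs i * etaGen cs j) ^ k) p)) = _
    rw [ih]
    set c := cs.simple i * cs.simple j with hc
    have e1 : (c ^ k * p.1 * (c ^ k)⁻¹ = cs.simple j) ↔ (p.1 = (c ^ (2 * k))⁻¹ * cs.simple j) := by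
      have h3 : (c ^ (2 * k))⁻¹ * cs.simple j = (c^k)⁻¹ * cs.simple j * c ^ k := by
        rw [two_mul, pow_add, mul_inv_rev, mul_assoc, mul_assoc, ← hj]
      rw [h3]
      constructor
      · intro h
        rw [← h]
        simp [mul_assoc]
      · intro h
        rw [h]
        simp [mul_assoc]
    have e2 : (cs.simple j * (c ^ k * p.1 * (c ^ k)⁻¹) * cs.simple j = cs.simple i)
        ↔ (p.1 = (c ^ (2 * k + 1))⁻¹ * cs.simple j) := by
      have h3 : (c ^ (2 * k + 1))⁻¹ * cs.simple j
          = (c^k)⁻¹ * (cs.simple j * cs.simple i * cs.simple j) * c ^ k := by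
        rw [show 2 * k + 1 = k + 1 + k by ring, pow_add, pow_add, mul_inv_rev, mul_inv_rev, mul_assoc,
          mul_assoc, ← hj, hc]
        simp [mul_assoc]
      rw [h3]
      constructor
      · intro h
        rw [← h]
        simp [mul_assoc]
      · intro h
        rw [h]
        simp [mul_assoc]
    rw [show 2 * (k + 1) = 2 * k + 1 + 1 by ring, Finset.sum_range_succ, Finset.sum_range_succ]
    simp only [etaGen, e1, e2]
    refine Prod.ext ?_ ?_
    · simp [hc, pow_succ', mul_assoc]
    · simp [add_assoc]

theorem etaGen_liftable : M.IsLiftable (etaGen cs) := by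
  intro i j
  funext p
  rw [etaGen_pow, cs.simple_mul_simple_pow, two_mul, Finset.sum_range_add]
  simp only [pow_add, cs.simple_mul_simple_pow, one_mul]
  refine Prod.ext ?_ ?_
  · simp; rfl
  · simp only [CharTwo.add_self_eq_zero, add_zero]; rfl

/-- the reflection cocycle -/
def eta (w t : W) : ZMod 2 := (cs.lift ⟨etaGen cs, etaGen_liftable cs⟩ w (t, 0)).2

theorem lift_eta (w : W) (p : W × ZMod 2) :
    cs.lift ⟨etaGen cs, etaGen_liftable cs⟩ w p = (w * p.1 * w⁻¹, p.2 + eta cs w p.1) := by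
  have key : ∀ (w : W) , ∀ p : W × ZMod 2, ∃ e : ZMod 2,
      ∀ a, cs.lift ⟨etaGen cs, etaGen_liftable cs⟩ w (p.1, a) = (w * p.1 * w⁻¹, a + e) := by
    intro w
    induction w using cs.simple_induction_left with
    | one => intro p; refine ⟨0, fun a => ?_⟩; rw [map_one]; simp; rfl
    | mul_simple_left w i ih =>
      intro p
      obtain ⟨e, he⟩ := ih p
      refine ⟨e + if w * p.1 * w⁻¹ = cs.simple i then 1 else 0, fun a => ?_⟩
      rw [map_mul, cs.lift_apply_simple]
      change etaGen cs i (_) = _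
      rw [he]
      simp [etaGen, mul_assoc, add_assoc]
  obtain ⟨e, he⟩ := key w p
  rw [show p = (p.1, p.2) from rfl, he, eta, he]
  simp

theorem eta_mul (x y t : W) : eta cs (x * y) t = eta cs y t + eta cs x (y * t * y⁻¹) := by
  have h := lift_eta cs (x * y) (t, 0)
  rw [map_mul] at h
  change (cs.lift ⟨etaGen cs, etaGen_liftable cs⟩ x) ((cs.lift ⟨etaGen cs, etaGen_liftable cs⟩ y) (t, 0)) = _ at h
  rw [lift_eta, lift_eta] at h
  simpa using (congrArg Prod.snd h).symm

theorem eta_simple (i : B) (t : W) : eta cs (cs.simple i) t = if t = cs.simple i then 1 else 0 := by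
  rw [eta, cs.lift_apply_simple]; simp [etaGen]

theorem eta_one (t : W) : eta cs 1 t = 0 := by
  rw [eta, map_one]; rfl

theorem mem_ris_of_eta (ω : List B) (t : W) (h : eta cs (cs.wordProd ω) t ≠ 0) :
    t ∈ cs.rightInvSeq ω := by
  induction ω with
  | nil => simp [eta_one] at h
  | cons i ω ih =>
    rw [cs.wordProd_cons, eta_mul, eta_simple] at h
    rw [CoxeterSystem.rightInvSeq, List.mem_cons]
    by_cases h1 : eta cs (cs.wordProd ω) t = 0
    · left
      rw [h1, zero_add] at h
      have : cs.wordProd ω * t * (cs.wordProd ω)⁻¹ = cs.simple i := by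
        by_contra h2
        simp [h2] at h
      rw [← this]; group
    · right; exact ih h1

theorem eta_self {t : W} (ht : cs.IsReflection t) : eta cs t t = 1 := by
  obtain ⟨w, i, rfl⟩ := ht
  have h0 : eta cs (w * w⁻¹) (w * cs.simple i * w⁻¹) = 0 := by rw [mul_inv_cancel, eta_one]
  rw [eta_mul] at h0
  rw [eta_mul, eta_mul, eta_simple]
  have e : w⁻¹ * (w * cs.simple i * w⁻¹) * w⁻¹⁻¹ = cs.simple i := by group
  rw [e] at h0 ⊢
  simp only [if_true, cs.inv_simple, cs.simple_mul_simple_self, one_mul]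
  linear_combination h0

theorem eta_ne_iff (w : W) {t : W} (ht : cs.IsReflection t) :
    eta cs w t ≠ 0 ↔ cs.length (w * t) < cs.length w := by
  have h1 : ∀ w : W, eta cs w t ≠ 0 → cs.length (w * t) < cs.length w := by
    intro w h
    obtain ⟨ω, hω, rfl⟩ := cs.exists_isReduced w
    exact (cs.isRightInversion_of_mem_rightInvSeq hω (mem_ris_of_eta cs ω t h)).2
  refine ⟨h1 w, fun h h0 => ?_⟩
  have h2 : eta cs (w * t) t ≠ 0 := by
    rw [eta_mul, eta_self cs ht, mul_inv_cancel_right, h0]; simp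
  have := h1 _ h2
  rw [mul_assoc, ht.mul_self, mul_one] at this
  omega

theorem inv_mul_iff (x y : W) {t : W} (ht : cs.IsReflection t) :
    cs.length (x * y * t) < cs.length (x * y) ↔
      ¬ (cs.length (y * t) < cs.length y ↔ cs.length (x * (y * t * y⁻¹)) < cs.length x) := by
  rw [← eta_ne_iff cs _ ht, ← eta_ne_iff cs _ ht, ← eta_ne_iff cs _ (ht.conj y), eta_mul]
  generalize eta cs y t = a
  generalize eta cs x _ = c
  revert a c
  decide

theorem exch (ω : List B) (i : B) (h : cs.length (cs.wordProd ω * cs.simple i) < cs.length (cs.wordProd ω)) :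
    ∃ j < ω.length, cs.wordProd ω * cs.simple i = cs.wordProd (ω.eraseIdx j) := by
  have := mem_ris_of_eta cs ω _ ((eta_ne_iff cs _ (cs.isReflection_simple i)).2 h)
  obtain ⟨j, hj, hj'⟩ := List.mem_iff_getElem.1 this
  refine ⟨j, by simpa using hj, ?_⟩
  rw [← cs.wordProd_mul_getD_rightInvSeq, List.getD_eq_getElem _ _ hj, hj']

theorem red_word {X : Set W} (hX : X ⊆ Set.range cs.simple) {u : W} (hu : u ∈ Subgroup.closure X) :
    ∃ ω : List B, cs.IsReduced ω ∧ cs.wordProd ω = u ∧ ∀ i ∈ ω, cs.simple i ∈ X := by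
  have step : ∀ (x y : W), y ∈ X →
      (∃ ω : List B, cs.IsReduced ω ∧ cs.wordProd ω = x ∧ ∀ i ∈ ω, cs.simple i ∈ X) →
      (∃ ω : List B, cs.IsReduced ω ∧ cs.wordProd ω = x * y ∧ ∀ i ∈ ω, cs.simple i ∈ X) := by
    rintro x y hy ⟨ω, hω, rfl, hω'⟩
    obtain ⟨i, rfl⟩ := hX hy
    rcases cs.length_mul_simple (cs.wordProd ω) i with h | h
    · refine ⟨ω.concat i, ?_, cs.wordProd_concat _ _, ?_⟩
      · rw [CoxeterSystem.IsReduced, cs.wordProd_concat, h, hω.eq]; simp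
      · intro k hk
        simp only [List.concat_eq_append, List.mem_append, List.mem_singleton] at hk
        rcases hk with hk | rfl
        · exact hω' _ hk
        · exact hy
    · obtain ⟨j, hj, hj'⟩ := exch cs ω i (by omega)
      refine ⟨ω.eraseIdx j, ?_, hj'.symm, fun k hk => hω' _ (List.mem_of_mem_eraseIdx hk)⟩
      rw [CoxeterSystem.IsReduced, ← hj', List.length_eraseIdx_of_lt hj]
      have := hω.eq
      omega
  induction hu using Subgroup.closure_induction_right with
  | one => exact ⟨[], by simp [CoxeterSystem.IsReduced], by simp, by simp⟩
  | mul_right x hx y hy ih => exact step x y hy ih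
  | mul_inv_cancel x hx y hy ih =>
    obtain ⟨i, rfl⟩ := hX hy
    rw [cs.inv_simple]
    exact step x _ hy ih

theorem exists_desc {X : Set W} (hX : X ⊆ Set.range cs.simple) {u : W} (hu : u ∈ Subgroup.closure X)
    (h1 : u ≠ 1) : ∃ s ∈ X, cs.length (u * s) < cs.length u := by
  obtain ⟨ω, hω, rfl, hω'⟩ := red_word cs hX hu
  rcases List.eq_nil_or_concat ω with rfl | ⟨L, i, rfl⟩
  · simp at h1
  · refine ⟨cs.simple i, hω' _ (by simp), ?_⟩
    rw [hω.eq, cs.wordProd_concat, cs.simple_mul_simple_cancel_right]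
    have := cs.length_wordProd_le L
    simp; omega

theorem simple_mem {X : Set W} (hX : X ⊆ Set.range cs.simple) {u : W} (hu : u ∈ Subgroup.closure X)
    (h1 : cs.length u = 1) : u ∈ X := by
  obtain ⟨ω, hω, rfl, hω'⟩ := red_word cs hX hu
  rw [hω.eq, List.length_eq_one_iff] at h1
  obtain ⟨a, rfl⟩ := h1
  simpa using hω' a (by simp)

theorem refl_of_mem {X : Set W} (hX : X ⊆ Set.range cs.simple) {s : W} (hs : s ∈ X) :
    cs.IsReflection s := by
  obtain ⟨i, rfl⟩ := hX hs
  exact cs.isReflection_simple i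

theorem len_of_mem {X : Set W} (hX : X ⊆ Set.range cs.simple) {s : W} (hs : s ∈ X) :
    cs.length s = 1 := by
  obtain ⟨i, rfl⟩ := hX hs
  exact cs.length_simple i

theorem add_of_gm {X : Set W} (hX : X ⊆ Set.range cs.simple) {x : W}
    (hx : ∀ u ∈ Subgroup.closure X, cs.length x ≤ cs.length (x * u)) :
    ∀ (n : ℕ), ∀ u ∈ Subgroup.closure X, cs.length u = n →
      cs.length (x * u) = cs.length x + cs.length u := by
  intro n
  induction n with
  | zero => intro u _ h; rw [cs.length_eq_zero_iff] at h; simp [h]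
  | succ n ih =>
    intro u hu hn
    obtain ⟨s, hs, hlt⟩ := exists_desc cs hX hu (by rintro rfl; simp at hn)
    have hsc := Subgroup.subset_closure hs
    have hr := refl_of_mem cs hX hs
    obtain ⟨i, rfl⟩ := hX hs
    have h2 : cs.length (u * cs.simple i) + 1 = cs.length u := by
      rcases cs.length_mul_simple u i with h | h <;> omega
    have h3 := ih (u * cs.simple i) (mul_mem hu hsc) (by omega)
    have h4 := inv_mul_iff cs x (u * cs.simple i) hr
    have h5 := hx (u * cs.simple i * cs.simple i * (u * cs.simple i)⁻¹)
      (mul_mem (mul_mem (mul_mem hu hsc) hsc) (inv_mem (mul_mem hu hsc)))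
    have h6 := cs.length_mul_simple (x * (u * cs.simple i)) i
    have h7 : ¬ (cs.length (u * cs.simple i * cs.simple i) < cs.length (u * cs.simple i)) := by
      rw [cs.simple_mul_simple_cancel_right]; omega
    have h8 : ¬ cs.length (x * (u * cs.simple i) * cs.simple i) < cs.length (x * (u * cs.simple i)) := by
      rw [h4, not_not, iff_false_left h7]; omega
    have h9 : x * (u * cs.simple i) * cs.simple i = x * u := by
      rw [mul_assoc, cs.simple_mul_simple_cancel_right]
    rw [h9] at h6 h8
    omega

/-- local minimality implies additivity of lengths -/
theorem len_add {X : Set W} (hX : X ⊆ Set.range cs.simple) {x : W}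
    (hx : ∀ t ∈ X, cs.length x < cs.length (x * t)) {u : W} (hu : u ∈ Subgroup.closure X) :
    cs.length (x * u) = cs.length x + cs.length u := by
  obtain ⟨v, hv, hmin⟩ : ∃ v ∈ Subgroup.closure X, ∀ u ∈ Subgroup.closure X,
      cs.length (x * v) ≤ cs.length (x * u) := by
    obtain ⟨v, hv⟩ := exists_minimalFor_of_wellFoundedLT (fun v => v ∈ Subgroup.closure X)
      (fun v => cs.length (x * v)) ⟨1, one_mem _⟩
    refine ⟨v, hv.1, fun u hu => ?_⟩
    rcases le_total (cs.length (x * v)) (cs.length (x * u)) with h | h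
    · exact h
    · exact hv.2 hu h
  have hadd := add_of_gm cs hX (x := x * v) (fun u hu => by
    rw [mul_assoc]; exact hmin _ (mul_mem hv hu))
  by_cases h1 : v⁻¹ = 1
  · rw [inv_eq_one] at h1; subst h1
    have := hadd _ u hu rfl
    simpa using this
  · obtain ⟨s, hs, hlt⟩ := exists_desc cs hX (inv_mem hv) h1
    have a1 := hadd _ _ (inv_mem hv) rfl
    have a2 := hadd _ _ (mul_mem (inv_mem hv) (Subgroup.subset_closure hs)) rfl
    have a3 := hx s hs
    rw [mul_inv_cancel_right] at a1
    rw [show x * v * (v⁻¹ * s) = x * s by group] at a2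
    omega

theorem inv_of_mem {X : Set W} (hX : X ⊆ Set.range cs.simple) {s : W} (hs : s ∈ X) :
    s⁻¹ = s := (refl_of_mem cs hX hs).inv

theorem len_add_left {X : Set W} (hX : X ⊆ Set.range cs.simple) {x : W}
    (hx : ∀ t ∈ X, cs.length x < cs.length (t * x)) {u : W} (hu : u ∈ Subgroup.closure X) :
    cs.length (u * x) = cs.length u + cs.length x := by
  have := len_add cs hX (x := x⁻¹) (fun t ht => by
    have := hx t ht
    rw [← cs.length_inv (t * x), mul_inv_rev, inv_of_mem cs hX ht] at this
    simpa using this) (inv_mem hu)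
  rw [← mul_inv_rev] at this
  simp only [cs.length_inv] at this
  omega

theorem longest_right {X : Set W} (hX : X ⊆ Set.range cs.simple) {w w0 : W}
    (h0 : w0 ∈ Subgroup.closure X) (hmax : ∀ u ∈ Subgroup.closure X, cs.length u ≤ cs.length w0)
    (hw : w ∈ Subgroup.closure X) (hd : ∀ s ∈ X, cs.length (w * s) < cs.length w) : w = w0 := by
  by_contra hne
  obtain ⟨s, hs, hlt⟩ := exists_desc cs hX (mul_mem (inv_mem h0) hw)
    (fun h => hne (inv_mul_eq_one.1 h).symm)
  have hr := refl_of_mem cs hX hs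
  have hsc := Subgroup.subset_closure hs
  have h1 := inv_mul_iff cs w0 (w0⁻¹ * w) hr
  have hy := mul_mem (inv_mem h0) hw
  have h2 : cs.length (w0 * ((w0⁻¹ * w) * s * (w0⁻¹ * w)⁻¹)) < cs.length w0 :=
    lt_of_le_of_ne (hmax _ (mul_mem h0 (mul_mem (mul_mem hy hsc) (inv_mem hy))))
      ((hr.conj (w0⁻¹ * w)).length_mul_left_ne w0)
  rw [iff_true_right h2, mul_inv_cancel_left] at h1
  exact h1.1 (hd s hs) hlt

theorem longest_inv {X : Set W} (hX : X ⊆ Set.range cs.simple) {w0 : W}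
    (h0 : w0 ∈ Subgroup.closure X) (hmax : ∀ u ∈ Subgroup.closure X, cs.length u ≤ cs.length w0) :
    w0⁻¹ = w0 := by
  refine longest_right cs hX h0 hmax (inv_mem h0) (fun s hs => ?_)
  have h1 := hmax _ (mul_mem (inv_mem h0) (Subgroup.subset_closure hs))
  have h2 := (refl_of_mem cs hX hs).length_mul_left_ne w0⁻¹
  rw [cs.length_inv] at h2 ⊢
  omega

theorem longest_left {X : Set W} (hX : X ⊆ Set.range cs.simple) {w w0 : W}
    (h0 : w0 ∈ Subgroup.closure X) (hmax : ∀ u ∈ Subgroup.closure X, cs.length u ≤ cs.length w0)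
    (hw : w ∈ Subgroup.closure X) (hd : ∀ s ∈ X, cs.length (s * w) < cs.length w) : w = w0 := by
  have := longest_right cs hX h0 hmax (inv_mem hw) (fun s hs => by
    have := hd s hs
    rw [← cs.length_inv, mul_inv_rev, inv_of_mem cs hX hs] at this
    simpa using this)
  rw [← longest_inv cs hX h0 hmax] at this
  exact inv_injective this

theorem deodhar {X : Set W} (hX : X ⊆ Set.range cs.simple) {x s : W}
    (hx : ∀ t ∈ X, cs.length x < cs.length (x * t)) (hs : cs.length s = 1) :
    (∀ t ∈ X, cs.length (s * x) < cs.length (s * x * t)) ∨ ∃ t ∈ X, s * x = x * t := by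
  by_cases h : ∀ t ∈ X, cs.length (s * x) < cs.length (s * x * t)
  · exact Or.inl h
  · right
    push Not at h
    obtain ⟨t, ht, hle⟩ := h
    refine ⟨t, ht, ?_⟩
    have hr := refl_of_mem cs hX ht
    have hlt := lt_of_le_of_ne hle (hr.length_mul_left_ne (s * x))
    have h1 := (inv_mul_iff cs s x hr).1 hlt
    have h2 := hx t ht
    have h3 : cs.length (s * (x * t * x⁻¹)) < cs.length s := by
      by_contra h4
      exact h1 (iff_of_false (by omega) h4)
    rw [hs, Nat.lt_one_iff, cs.length_eq_zero_iff, mul_eq_one_iff_eq_inv, (hr.conj x).inv] at h3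
    rw [h3]; group

theorem kil {X : Set W} (hX : X ⊆ Set.range cs.simple) {b : W}
    (hR : ∀ t ∈ X, cs.length b < cs.length (b * t))
    (hL : ∀ t ∈ X, cs.length b < cs.length (t * b)) {u s t : W} (hu : u ∈ Subgroup.closure X)
    (hs : s ∈ X) (ht : t ∈ X) (h : s * (u * b) = u * b * t) :
    ∃ r ∈ X ∩ ((fun s => b * s * b⁻¹) '' X), s * u = u * r := by
  have hr : u⁻¹ * s * u = b * t * b⁻¹ := by
    rw [eq_mul_inv_iff_mul_eq, mul_assoc, mul_assoc, h]; group
  have hm : u⁻¹ * s * u ∈ Subgroup.closure X :=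
    mul_mem (mul_mem (inv_mem hu) (Subgroup.subset_closure hs)) hu
  refine ⟨u⁻¹ * s * u, ⟨simple_mem cs hX hm ?_, t, ht, hr.symm⟩, by group⟩
  have h1 := len_add_left cs hX hL hm
  rw [hr, inv_mul_cancel_right, len_add cs hX hR (Subgroup.subset_closure ht),
    len_of_mem cs hX ht] at h1
  rw [hr]; omega

theorem closureH_conj {X : Set W} {b h : W}
    (hh : h ∈ Subgroup.closure (X ∩ ((fun s => b * s * b⁻¹) '' X))) :
    b⁻¹ * h * b ∈ Subgroup.closure X := by
  induction hh using Subgroup.closure_induction with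
  | mem x hx =>
    obtain ⟨_, t, ht, rfl⟩ := hx
    have : b⁻¹ * (b * t * b⁻¹) * b = t := by group
    simp only [this]
    exact Subgroup.subset_closure ht
  | one => simp
  | mul x y _ _ hx hy =>
    have : b⁻¹ * (x * y) * b = (b⁻¹ * x * b) * (b⁻¹ * y * b) := by group
    rw [this]; exact mul_mem hx hy
  | inv x _ hx =>
    have : b⁻¹ * x⁻¹ * b = (b⁻¹ * x * b)⁻¹ := by group
    rw [this]; exact inv_mem hx

theorem decomp {X : Set W} (hX : X ⊆ Set.range cs.simple) {b : W}
    (hR : ∀ t ∈ X, cs.length b < cs.length (b * t))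
    (hL : ∀ t ∈ X, cs.length b < cs.length (t * b)) {u : W} (hu : u ∈ Subgroup.closure X) :
    ∃ u' ∈ Subgroup.closure X, ∃ h ∈ Subgroup.closure (X ∩ ((fun s => b * s * b⁻¹) '' X)),
      u = u' * h ∧ ∀ t ∈ X, cs.length (u' * b) < cs.length (u' * b * t) := by
  have step : ∀ s ∈ X, ∀ u : W,
    (∃ u' ∈ Subgroup.closure X, ∃ h ∈ Subgroup.closure (X ∩ ((fun s => b * s * b⁻¹) '' X)),
      u = u' * h ∧ ∀ t ∈ X, cs.length (u' * b) < cs.length (u' * b * t)) →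
    (∃ u' ∈ Subgroup.closure X, ∃ h ∈ Subgroup.closure (X ∩ ((fun s => b * s * b⁻¹) '' X)),
      s * u = u' * h ∧ ∀ t ∈ X, cs.length (u' * b) < cs.length (u' * b * t)) := by
    rintro s hs _ ⟨u', hu', h, hh, rfl, hmin⟩
    rcases deodhar cs hX hmin (len_of_mem cs hX hs) with h1 | ⟨t, ht, h1⟩
    · exact ⟨s * u', mul_mem (Subgroup.subset_closure hs) hu', h, hh, by group, by
        simpa [mul_assoc] using h1⟩
    · obtain ⟨r, hr, hru⟩ := kil cs hX hR hL hu' hs ht h1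
      exact ⟨u', hu', r * h, mul_mem (Subgroup.subset_closure hr) hh, by
        rw [← mul_assoc, hru, mul_assoc], hmin⟩
  induction hu using Subgroup.closure_induction_left with
  | one => exact ⟨1, one_mem _, 1, one_mem _, by simp, by simpa using hR⟩
  | mul_left x hx y hy ih => exact step x hx y ih
  | inv_mul_cancel x hx y hy ih => rw [inv_of_mem cs hX hx]; exact step x hx y ih

theorem right_min_form {X : Set W} (hX : X ⊆ Set.range cs.simple) {b : W}
    (hR : ∀ t ∈ X, cs.length b < cs.length (b * t))
    (hL : ∀ t ∈ X, cs.length b < cs.length (t * b)) {u v : W} (hu : u ∈ Subgroup.closure X)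
    (hv : v ∈ Subgroup.closure X)
    (hx : ∀ t ∈ X, cs.length (u * b * v) < cs.length (u * b * v * t)) :
    ∃ u' ∈ Subgroup.closure X, u * b * v = u' * b := by
  obtain ⟨u', hu', h, hh, rfl, hmin⟩ := decomp cs hX hR hL hu
  refine ⟨u', hu', ?_⟩
  have hy := mul_mem (closureH_conj hh) hv
  have a1 := len_add cs hX hmin hy
  have a2 := len_add cs hX hx (inv_mem hy)
  have e1 : u' * b * (b⁻¹ * h * b * v) = u' * h * b * v := by group
  have e2 : u' * h * b * v * (b⁻¹ * h * b * v)⁻¹ = u' * b := by group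
  rw [e1] at a1
  rw [e2] at a2
  have : cs.length (b⁻¹ * h * b * v) = 0 := by omega
  rw [cs.length_eq_zero_iff] at this
  rw [← e1, this, mul_one]

theorem min_unique {X : Set W} (hX : X ⊆ Set.range cs.simple) {b : W}
    (hR : ∀ t ∈ X, cs.length b < cs.length (b * t))
    (hL : ∀ t ∈ X, cs.length b < cs.length (t * b)) {u v : W} (hu : u ∈ Subgroup.closure X)
    (hv : v ∈ Subgroup.closure X)
    (hx : ∀ t ∈ X, cs.length (u * b * v) < cs.length (u * b * v * t))
    (hlen : cs.length (u * b * v) = cs.length b) :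
    u * b * v = b := by
  obtain ⟨u', hu', h⟩ := right_min_form cs hX hR hL hu hv hx
  have := len_add_left cs hX hL hu'
  rw [h] at hlen ⊢
  have : cs.length u' = 0 := by omega
  rw [cs.length_eq_zero_iff] at this
  simp [this]

theorem top_form {X : Set W} (hX : X ⊆ Set.range cs.simple) {b : W}
    (hR : ∀ t ∈ X, cs.length b < cs.length (b * t))
    (hL : ∀ t ∈ X, cs.length b < cs.length (t * b)) {u w0 wH : W} (hu : u ∈ Subgroup.closure X)
    (h0 : w0 ∈ Subgroup.closure X) (hmax : ∀ u ∈ Subgroup.closure X, cs.length u ≤ cs.length w0)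
    (hH : wH ∈ Subgroup.closure (X ∩ ((fun s => b * s * b⁻¹) '' X)))
    (hHmax : ∀ u ∈ Subgroup.closure (X ∩ ((fun s => b * s * b⁻¹) '' X)),
      cs.length u ≤ cs.length wH)
    (hx : ∀ t ∈ X, cs.length (u * b) < cs.length (u * b * t))
    (hd : ∀ s ∈ X, cs.length (s * (u * b) * w0) < cs.length (u * b * w0)) :
    u * wH = w0 := by
  have hHX : X ∩ ((fun s => b * s * b⁻¹) '' X) ⊆ Set.range cs.simple :=
    fun x hx => hX hx.1
  have hsub : Subgroup.closure (X ∩ ((fun s => b * s * b⁻¹) '' X)) ≤ Subgroup.closure X :=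
    Subgroup.closure_mono Set.inter_subset_left
  have hub := len_add_left cs hX hL hu
  have humin : ∀ r ∈ X ∩ ((fun s => b * s * b⁻¹) '' X), cs.length u < cs.length (u * r) := by
    rintro _ ⟨hr, t, ht, rfl⟩
    have a1 := len_add_left cs hX hL (mul_mem hu (Subgroup.subset_closure hr))
    have a2 := hx t ht
    have e : u * (b * t * b⁻¹) * b = u * b * t := by group
    simp only [e] at a1
    change cs.length u < cs.length (u * (b * t * b⁻¹))
    omega
  have huH := len_add cs hHX humin hH
  refine longest_left cs hX h0 hmax (mul_mem hu (hsub hH)) (fun s hs => ?_)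
  rcases deodhar cs hX hx (len_of_mem cs hX hs) with h1 | ⟨t, ht, h1⟩
  · have a1 := len_add cs hX h1 h0
    have a2 := len_add cs hX hx h0
    have a3 := hd s hs
    have a4 := len_add_left cs hX hL (mul_mem (Subgroup.subset_closure hs) hu)
    have a5 := cs.length_mul_le (s * u) wH
    rw [mul_assoc s u b] at a4
    rw [← mul_assoc s u wH]
    omega
  · obtain ⟨r, hr, hru⟩ := kil cs hX hR hL hu hs ht h1
    rw [← mul_assoc, hru, mul_assoc]
    have a1 := hHmax _ (mul_mem (Subgroup.subset_closure hr) hH)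
    have a2 := (refl_of_mem cs hHX hr).length_mul_right_ne wH
    have a3 := cs.length_mul_le u (r * wH)
    omega

end Cox

/-! ### Linear algebra and the conjugation action -/
namespace AffineData
section Lin
variable {B W : Type} [Group W] {M : CoxeterMatrix B} {cs : CoxeterSystem M W} (D : AffineData cs)

theorem rho_iota (w : W) (l : D.Lam) :
    D.rho w (D.iota l) = D.iota ⟨w * (l : W) * w⁻¹, D.hLam_normal.conj_mem _ l.2 w⟩ :=
  D.hrho w l

theorem span_iota : Submodule.span ℚ (Set.range D.iota) = ⊤ := by
  rw [eq_top_iff, ← (Pi.basisFun ℚ (Fin D.rank)).span_eq, Submodule.span_le]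
  rintro _ ⟨i, rfl⟩
  refine Submodule.subset_span ⟨D.freeIso.symm (Multiplicative.ofAdd (Pi.single i 1)), ?_⟩
  funext j
  simp only [iota, MulEquiv.apply_symm_apply, toAdd_ofAdd, Pi.basisFun_apply]
  by_cases h : j = i
  · subst h; simp
  · simp [h]

theorem ext_iota {f g : (Fin D.rank → ℚ) →ₗ[ℚ] (Fin D.rank → ℚ)}
    (h : ∀ l, f (D.iota l) = g (D.iota l)) : f = g :=
  LinearMap.ext_on_range D.span_iota h

theorem rho_mul (x y : W) : D.rho (x * y) = D.rho x ∘ₗ D.rho y := by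
  refine D.ext_iota (fun l => ?_)
  rw [LinearMap.comp_apply, rho_iota, rho_iota, rho_iota]
  congr 2
  group

theorem rho_lam {l : W} (hl : l ∈ D.Lam) : D.rho l = LinearMap.id := by
  refine D.ext_iota (fun k => ?_)
  rw [rho_iota, LinearMap.id_apply]
  congr 1
  ext
  change l * (k : W) * l⁻¹ = k
  rw [D.hLam_comm l hl k k.2]; group

theorem rho_one : D.rho 1 = LinearMap.id := D.rho_lam (one_mem _)

theorem rho_mul_apply (x y : W) (v : Fin D.rank → ℚ) : D.rho (x * y) v = D.rho x (D.rho y v) := by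
  rw [rho_mul]; rfl

theorem rho_pr (w x : W) : D.rho (D.pr w * x) = D.rho (w * x) := by
  have h : w * x = (w * (D.pr w)⁻¹) * (D.pr w * x) := by group
  rw [h, rho_mul _ (w * (D.pr w)⁻¹), D.rho_lam (D.hpr w).2, LinearMap.id_comp]

/-- dimension of the fixed space -/
def fx (w : W) : ℕ :=
  Module.finrank ℚ (Module.End.eigenspace (D.rho w : Module.End ℚ (Fin D.rank → ℚ)) 1)

theorem eigenspace_neg_neg {V : Type*} [AddCommGroup V] [Module ℚ V] (f : Module.End ℚ V) :
    Module.End.eigenspace (-f) (-1) = Module.End.eigenspace f 1 := by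
  ext v
  simp

theorem eNeg_neg (w : W) : D.eNeg (-(D.rho w)) = D.fx w := by
  rw [eNeg, fx, eigenspace_neg_neg]

theorem fx_conj_le (x g : W) : D.fx (x * g * x⁻¹) ≤ D.fx g := by
  have : Module.End.eigenspace (D.rho (x * g * x⁻¹) : Module.End ℚ (Fin D.rank → ℚ)) 1 ≤
      (Module.End.eigenspace (D.rho g : Module.End ℚ (Fin D.rank → ℚ)) 1).map (D.rho x) := by
    intro v hv
    rw [Module.End.mem_eigenspace_iff, one_smul] at hv
    refine ⟨D.rho x⁻¹ v, ?_, ?_⟩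
    · rw [SetLike.mem_coe, Module.End.mem_eigenspace_iff, one_smul]
      conv_rhs => rw [← hv]
      simp only [← rho_mul_apply]
      congr 2
      group
    · rw [← rho_mul_apply, mul_inv_cancel, rho_one]; rfl
  exact (Submodule.finrank_mono this).trans (Submodule.finrank_map_le _ _)

theorem fx_conj (x g : W) : D.fx (x * g * x⁻¹) = D.fx g := by
  refine le_antisymm (D.fx_conj_le x g) ?_
  have := D.fx_conj_le x⁻¹ (x * g * x⁻¹)
  rwa [show x⁻¹ * (x * g * x⁻¹) * x⁻¹⁻¹ = g by group] at this

/-- the invariants of a subgroup -/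
def Inv (G : Subgroup W) : Submodule ℚ (Fin D.rank → ℚ) where
  carrier := {v | ∀ h ∈ G, D.rho h v = v}
  add_mem' := by intro a b ha hb h hh; rw [map_add, ha h hh, hb h hh]
  zero_mem' := by intro h _; simp
  smul_mem' := by intro c a ha h hh; rw [map_smul, ha h hh]

theorem sub_mem_R (b : W) {h : W} (hh : h ∈ D.WHstar b) (v : Fin D.rank → ℚ) :
    v - D.rho h v ∈ D.Rprime b := by
  induction hh using Subgroup.closure_induction generalizing v with
  | mem s hs =>
    have hv : v ∈ Submodule.span ℚ (Set.range D.iota) := by rw [span_iota]; trivial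
    induction hv using Submodule.span_induction with
    | mem x hx =>
      obtain ⟨l, rfl⟩ := hx
      refine Submodule.subset_span ⟨l, s, hs, ?_⟩
      rw [rho_iota]
    | zero => simp
    | add x y _ _ hx hy =>
      rw [map_add, show x + y - (D.rho s x + D.rho s y) = (x - D.rho s x) + (y - D.rho s y) by abel]
      exact add_mem hx hy
    | smul a x _ hx =>
      rw [map_smul, ← smul_sub]
      exact Submodule.smul_mem _ _ hx
  | one => rw [rho_one]; simp
  | mul x y _ _ hx hy =>
    have := add_mem (hy v) (hx (D.rho y v))
    rw [rho_mul_apply]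
    simpa using this
  | inv x _ hx =>
    have := neg_mem (hx (D.rho x⁻¹ v))
    rw [← rho_mul_apply, mul_inv_cancel, rho_one] at this
    simpa using this

/-- the unnormalized averaging operator -/
def avg (G : Subgroup W) [Fintype G] (v : Fin D.rank → ℚ) : Fin D.rank → ℚ :=
  ∑ h : G, D.rho (h : W) v

theorem avg_add (G : Subgroup W) [Fintype G] (v w : Fin D.rank → ℚ) :
    D.avg G (v + w) = D.avg G v + D.avg G w := by
  simp [avg, Finset.sum_add_distrib]

theorem avg_sub (G : Subgroup W) [Fintype G] (v w : Fin D.rank → ℚ) :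
    D.avg G (v - w) = D.avg G v - D.avg G w := by
  simp [avg, Finset.sum_sub_distrib]

theorem avg_rho (G : Subgroup W) [Fintype G] {s : W} (hs : s ∈ G) (v : Fin D.rank → ℚ) :
    D.avg G (D.rho s v) = D.avg G v := by
  simp only [avg, ← rho_mul_apply]
  exact Fintype.sum_equiv (Equiv.mulRight (⟨s, hs⟩ : G)) _ _ (fun x => rfl)

theorem avg_inv (G : Subgroup W) [Fintype G] (v : Fin D.rank → ℚ) : D.avg G v ∈ D.Inv G := by
  intro s hs
  simp only [avg, map_sum, ← rho_mul_apply]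
  exact Fintype.sum_equiv (Equiv.mulLeft (⟨s, hs⟩ : G)) _ _ (fun x => rfl)

theorem avg_of_inv (G : Subgroup W) [Fintype G] {v : Fin D.rank → ℚ} (hv : v ∈ D.Inv G) :
    D.avg G v = (Fintype.card G : ℚ) • v := by
  rw [avg, Finset.sum_congr rfl (fun (h : G) _ => hv h h.2)]
  simp [Nat.cast_smul_eq_nsmul]

theorem avg_R (b : W) [Fintype (D.WHstar b)] {v : Fin D.rank → ℚ} (hv : v ∈ D.Rprime b) :
    D.avg (D.WHstar b) v = 0 := by
  induction hv using Submodule.span_induction with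
  | mem x hx =>
    obtain ⟨l, s, hs, rfl⟩ := hx
    rw [← rho_iota, avg_sub, D.avg_rho (D.WHstar b) (Subgroup.subset_closure hs), sub_self]
  | zero => simp [avg]
  | add x y _ _ hx hy => rw [avg_add, hx, hy, add_zero]
  | smul a x _ hx =>
    have : D.avg (D.WHstar b) (a • x) = a • D.avg (D.WHstar b) x := by
      simp [avg, Finset.smul_sum]
    rw [this, hx, smul_zero]

theorem fx_split (b : W) [Fintype (D.WHstar b)]
    (rho' : W → (↥(D.Rprime b) →ₗ[ℚ] ↥(D.Rprime b)))
    (hrho' : ∀ u ∈ D.WHstar b, ∀ x : ↥(D.Rprime b),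
      ((rho' u x : Fin D.rank → ℚ)) = D.rho u (x : Fin D.rank → ℚ))
    {g : W} (hg : g ∈ D.WHstar b) :
    D.fx g = D.eNeg' (-(rho' g)) + Module.finrank ℚ (D.Inv (D.WHstar b)) := by
  set G := D.WHstar b with hG
  set E := Module.End.eigenspace (D.rho g : Module.End ℚ (Fin D.rank → ℚ)) 1 with hE
  have hcard : (Fintype.card G : ℚ) ≠ 0 := by
    exact_mod_cast Fintype.card_ne_zero
  have memE : ∀ v, v ∈ E ↔ D.rho g v = v := by
    intro v; rw [hE, Module.End.mem_eigenspace_iff, one_smul]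
  have hInvE : D.Inv G ≤ E := fun v hv => (memE v).2 (hv g hg)
  have h1 : (Module.End.eigenspace (rho' g : Module.End ℚ (D.Rprime b)) 1).map (D.Rprime b).subtype
      = E ⊓ D.Rprime b := by
    ext v
    constructor
    · rintro ⟨x, hx, rfl⟩
      rw [SetLike.mem_coe, Module.End.mem_eigenspace_iff, one_smul] at hx
      refine ⟨(memE _).2 ?_, x.2⟩
      change D.rho g (x : Fin D.rank → ℚ) = x
      rw [← hrho' g hg, hx]
    · rintro ⟨hv, hR⟩
      refine ⟨⟨v, hR⟩, ?_, rfl⟩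
      rw [SetLike.mem_coe, Module.End.mem_eigenspace_iff, one_smul]
      ext1
      rw [hrho' g hg]
      exact (memE _).1 hv
  have h2 : (E ⊓ D.Rprime b) ⊔ D.Inv G = E := by
    refine le_antisymm (sup_le inf_le_left hInvE) (fun v hv => ?_)
    have hP : (Fintype.card G : ℚ)⁻¹ • D.avg G v ∈ D.Inv G :=
      Submodule.smul_mem _ _ (D.avg_inv G v)
    have hR : v - (Fintype.card G : ℚ)⁻¹ • D.avg G v ∈ D.Rprime b := by
      have e : v - (Fintype.card G : ℚ)⁻¹ • D.avg G v
          = (Fintype.card G : ℚ)⁻¹ • ∑ h : G, (v - D.rho (h : W) v) := by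
        rw [Finset.sum_sub_distrib, smul_sub]
        congr 1
        rw [Finset.sum_const, Finset.card_univ, ← Nat.cast_smul_eq_nsmul ℚ, smul_smul,
          inv_mul_cancel₀ hcard, one_smul]
      rw [e]
      exact Submodule.smul_mem _ _ (Submodule.sum_mem _ (fun h _ => D.sub_mem_R b h.2 v))
    have := Submodule.add_mem_sup (S := E ⊓ D.Rprime b) (T := D.Inv G)
      ⟨sub_mem hv (hInvE hP), hR⟩ hP
    simpa using this
  have h3 : (E ⊓ D.Rprime b) ⊓ D.Inv G = ⊥ := by
    rw [eq_bot_iff]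
    rintro v ⟨⟨_, hR⟩, hI⟩
    have := D.avg_of_inv G hI
    rw [D.avg_R b hR] at this
    exact (smul_eq_zero.1 this.symm).resolve_left hcard
  have h4 := Submodule.finrank_sup_add_finrank_inf_eq (E ⊓ D.Rprime b) (D.Inv G)
  rw [h2, h3, finrank_bot, add_zero, ← h1, Submodule.finrank_map_subtype_eq] at h4
  rw [fx, h4, eNeg', eigenspace_neg_neg]

theorem phi_eq (w : W) : D.phi w = (D.fx (w * D.wJ) : ℤ) - D.fx D.wJ := by
  rw [phi, Amap, Amap, eNeg_neg, eNeg_neg, one_mul, fx, rho_pr, ← fx]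

theorem hJX : D.Jset ⊆ Set.range cs.simple := Set.sdiff_subset

theorem st_len_le (w : W) : cs.length (D.st w) ≤ cs.length w := by
  obtain ⟨ω, hω, rfl⟩ := cs.exists_isReduced w
  rw [hω.eq]
  clear hω
  induction ω with
  | nil => simp
  | cons i ω ih =>
    rw [cs.wordProd_cons, map_mul]
    obtain ⟨j, hj⟩ := D.hst_S _ ⟨i, rfl⟩
    have h1 := cs.length_mul_le (D.st (cs.simple i)) (D.st (cs.wordProd ω))
    rw [← hj, cs.length_simple] at h1
    rw [← hj, List.length_cons]
    omega

theorem st_len (w : W) : cs.length (D.st w) = cs.length w := by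
  refine le_antisymm (D.st_len_le w) ?_
  have := D.st_len_le (D.st w)
  rwa [D.hst_inv] at this

theorem st_WJ {u : W} (hu : u ∈ D.WJ) : D.st u ∈ D.WJ := by
  rw [D.hst_J u hu]
  exact mul_mem (mul_mem D.hwJ_mem hu) D.hwJ_mem

theorem st_J {s : W} (hs : s ∈ D.Jset) : D.st s ∈ D.Jset := by
  refine simple_mem cs D.hJX (D.st_WJ (Subgroup.subset_closure hs)) ?_
  rw [st_len, len_of_mem cs D.hJX hs]

theorem WHstar_eq (b : W) : D.WHstar b = (Subgroup.closure (D.Hset b)).map D.st.toMonoidHom := by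
  rw [MonoidHom.map_closure]; rfl

theorem st_mem_of_WHstar (b : W) {u : W} (hu : u ∈ D.WHstar b) :
    D.st u ∈ Subgroup.closure (D.Hset b) := by
  rw [WHstar_eq] at hu
  obtain ⟨v, hv, rfl⟩ := hu
  change D.st (D.st v) ∈ _
  rw [D.hst_inv]; exact hv

theorem st_mem_WHstar (b : W) {u : W} (hu : u ∈ Subgroup.closure (D.Hset b)) :
    D.st u ∈ D.WHstar b := by
  rw [WHstar_eq]
  exact ⟨u, hu, rfl⟩

theorem WHstar_le (b : W) : D.WHstar b ≤ D.WJ := by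
  refine (Subgroup.closure_le _).2 ?_
  rintro _ ⟨s, hs, rfl⟩
  exact Subgroup.subset_closure (D.st_J hs.1)

theorem wJ_inv : D.wJ⁻¹ = D.wJ := longest_inv cs D.hJX D.hwJ_mem D.hwJ_max

end Lin
end AffineData

/-- For every `z ∈ W_{H*}` satisfying `b⁻¹ z* b = z⁻¹`, the element `bz`
lies in `I_*` and `φ(bz) = φ'(z) + φ(b)`. -/
theorem phi_b_mul (cs : CoxeterSystem M W) (D : AffineData cs)
    (mu b wHs : W) (hmu : D.IsDominant mu)
    (hb_mem : b ∈ D.DCoset mu)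
    (hb_min : ∀ y ∈ D.DCoset mu, cs.length b ≤ cs.length y)
    (hwHs_mem : wHs ∈ D.WHstar b)
    (hwHs_max : ∀ u ∈ D.WHstar b, cs.length u ≤ cs.length wHs)
    (rho' : W → (↥(D.Rprime b) →ₗ[ℚ] ↥(D.Rprime b)))
    (hrho' : ∀ u ∈ D.WHstar b, ∀ x : ↥(D.Rprime b),
      ((rho' u x : Fin D.rank → ℚ)) = D.rho u (x : Fin D.rank → ℚ))
    (z : W) (hz : z ∈ D.WHstar b) (hze : b⁻¹ * D.st z * b = z⁻¹) :
    D.st (b * z) = (b * z)⁻¹ ∧ D.phi (b * z) = D.phiP rho' wHs z + D.phi b := by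
  have hX := D.hJX
  have hwJ := D.wJ_inv
  have hwJ2 : D.wJ * D.wJ = 1 := by
    have := mul_inv_cancel D.wJ
    rwa [hwJ] at this
  have hwJm : D.wJ ∈ D.WJ := D.hwJ_mem
  have hJW : ∀ t ∈ D.Jset, t ∈ D.WJ := fun t ht => Subgroup.subset_closure ht
  obtain ⟨p, hp, q, hq, hb⟩ := hb_mem
  have hDC : ∀ u ∈ D.WJ, ∀ v ∈ D.WJ, u * b * v ∈ D.DCoset mu := by
    intro u hu v hv
    exact ⟨u * p, mul_mem hu hp, q * v, mul_mem hq hv, by rw [hb]; group⟩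
  have hR : ∀ t ∈ D.Jset, cs.length b < cs.length (b * t) := by
    intro t ht
    refine lt_of_le_of_ne ?_ ((refl_of_mem cs hX ht).length_mul_left_ne b).symm
    have := hb_min _ (hDC 1 (one_mem _) t (hJW t ht))
    simpa using this
  have hL : ∀ t ∈ D.Jset, cs.length b < cs.length (t * b) := by
    intro t ht
    refine lt_of_le_of_ne ?_ ((refl_of_mem cs hX ht).length_mul_right_ne b).symm
    have := hb_min _ (hDC t (hJW t ht) 1 (one_mem _))
    simpa using this
  obtain ⟨hmuL, hmuD⟩ := hmu
  have hstmu : D.st mu = D.wJ * mu⁻¹ * D.wJ := by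
    rw [D.hst_Lam mu hmuL]; simp [mul_assoc, hwJ]
  -- `b* = b⁻¹`
  have hstb : D.st b = b⁻¹ := by
    have e : (D.st b)⁻¹ = ((D.st q)⁻¹ * D.wJ * p⁻¹) * b * (q⁻¹ * D.wJ * (D.st p)⁻¹) := by
      rw [hb, map_mul, map_mul, hstmu]
      simp only [mul_inv_rev, inv_inv, hwJ]
      group
    have hu : (D.st q)⁻¹ * D.wJ * p⁻¹ ∈ D.WJ :=
      mul_mem (mul_mem (inv_mem (D.st_WJ hq)) hwJm) (inv_mem hp)
    have hv : q⁻¹ * D.wJ * (D.st p)⁻¹ ∈ D.WJ :=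
      mul_mem (mul_mem (inv_mem hq) hwJm) (inv_mem (D.st_WJ hp))
    have hlen : cs.length ((D.st b)⁻¹) = cs.length b := by rw [cs.length_inv, D.st_len]
    have := min_unique cs hX hR hL hu hv (by
      intro t ht
      rw [← e, hlen, e]
      refine lt_of_le_of_ne ?_ ?_
      · have := hb_min _ (hDC _ hu _ (mul_mem hv (hJW t ht)))
        simpa [mul_assoc] using this
      · have := (refl_of_mem cs hX ht).length_mul_left_ne ((D.st b)⁻¹)
        rw [hlen, e] at this
        exact this.symm) (by rw [← e, hlen])
    rw [← e] at this
    exact inv_eq_iff_eq_inv.1 this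
  refine ⟨?_, ?_⟩
  · rw [map_mul, hstb, mul_inv_rev, ← hze]; group
  -- `mu` is right minimal
  have hmuR : ∀ t ∈ D.Jset, cs.length mu < cs.length (mu * t) := by
    intro t ht
    have h1 := cs.length_mul_le (mu * t) (t * D.wJ)
    have h2 := D.hwJ_max _ (mul_mem (hJW t ht) hwJm)
    have h3 := (refl_of_mem cs hX ht).length_mul_right_ne D.wJ
    have e : mu * t * (t * D.wJ) = mu * D.wJ := by
      rw [mul_assoc, ← mul_assoc t t, (refl_of_mem cs hX ht).mul_self, one_mul]
    rw [e] at h1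
    omega
  have hd : ∀ s ∈ D.Jset, cs.length (s * mu * D.wJ) < cs.length (mu * D.wJ) := by
    intro s hs
    have hs' := D.st_J hs
    have h1 := len_add cs hX hmuR (mul_mem hwJm (hJW _ hs'))
    have h2 := D.hwJ_max _ (mul_mem hwJm (hJW _ hs'))
    have h3 := (refl_of_mem cs hX hs').length_mul_left_ne D.wJ
    have e : D.st (mu * (D.wJ * D.st s)) = (s * mu * D.wJ)⁻¹ := by
      rw [map_mul, map_mul, hstmu, D.hst_inv, D.hst_J _ hwJm, mul_inv_rev, mul_inv_rev, hwJ,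
        inv_of_mem cs hX hs]
      calc D.wJ * mu⁻¹ * D.wJ * (D.wJ * D.wJ * D.wJ * s)
          = D.wJ * mu⁻¹ * (D.wJ * D.wJ) * (D.wJ * D.wJ) * s := by group
        _ = _ := by rw [hwJ2]; group
    rw [← cs.length_inv, ← e, D.st_len]
    omega
  have hmub : mu = p⁻¹ * b * q⁻¹ := by rw [hb]; group
  obtain ⟨u, hu, hub⟩ := right_min_form cs hX hR hL (inv_mem hp) (inv_mem hq) (by
    rw [← hmub]; exact hmuR)
  rw [← hmub] at hub
  have htop := top_form cs hX hR hL (wH := D.st wHs) hu D.hwJ_mem D.hwJ_max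
    (D.st_mem_of_WHstar b hwHs_mem)
    (fun v hv => by
      have := hwHs_max _ (D.st_mem_WHstar b hv)
      rwa [D.st_len] at this ⊢)
    (by rw [← hub]; exact hmuR) (by rw [← hub]; exact hd)
  rw [D.hst_J _ (D.WHstar_le b hwHs_mem)] at htop
  have hui : u⁻¹ = D.wJ * wHs := by
    rw [inv_eq_iff_mul_eq_one]
    have h1 : u * (D.wJ * wHs) = (u * (D.wJ * wHs * D.wJ)) * D.wJ⁻¹ := by group
    rw [h1, htop, mul_inv_cancel]
  have hbu : b = D.wJ * wHs * mu := by rw [← hui, hub]; group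
  -- fixed space dimensions
  have hfx : ∀ y : W, D.fx (b * y * D.wJ) = D.fx (y * wHs) := by
    intro y
    have h1 : D.fx (b * y * D.wJ) = D.fx (D.wJ * (wHs * y) * D.wJ⁻¹) := by
      have h2 : D.rho (b * y * D.wJ) = D.rho (D.wJ * (wHs * y) * D.wJ⁻¹) := by
        rw [hbu, hwJ]
        rw [show D.wJ * wHs * mu * y * D.wJ = D.wJ * wHs * (mu * (y * D.wJ)) by group,
          show D.wJ * (wHs * y) * D.wJ = D.wJ * wHs * (y * D.wJ) by group,
          D.rho_mul (D.wJ * wHs), D.rho_mul mu, D.rho_lam hmuL, LinearMap.id_comp,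
          ← D.rho_mul]
      rw [AffineData.fx, h2, ← AffineData.fx]
    rw [h1, D.fx_conj]
    have := D.fx_conj wHs (y * wHs)
    rwa [show wHs * (y * wHs) * wHs⁻¹ = wHs * y by group] at this
  have hfin : Finite (D.WHstar b) :=
    Set.Finite.subset D.hWJ_fin (D.WHstar_le b)
  have := Fintype.ofFinite (D.WHstar b)
  have hz1 := D.fx_split b rho' hrho' (mul_mem hz hwHs_mem)
  have hz2 := D.fx_split b rho' hrho' hwHs_mem
  have hf1 := hfx z
  have hf2 := hfx 1
  rw [mul_one, one_mul] at hf2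
  rw [D.phi_eq, D.phi_eq, hf1, hf2, AffineData.phiP, hz1, hz2]
  push_cast
  ring

end LY
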